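/- Let b be a prime and α ≥ 2 an integer. For every real λ > 1/α, Σ_{k ∈ E} b^{−λ μ_α(⌊k/b⌋)} ≤ A₁, where A₁ = (b/(b−1)) [ Σ_{v=1}^{α−1} ∏_{i=1}^{v} (b−1)/(b^{λi}−1) + ((b^{λα}−1)/(b^{λα}−b)) ∏_{i=1}^{α} (b−1)/(b^{λi}−1) ]. -/

import Mathlib

namespace QMC

/-- the `i`-th `b`-adic digit of `k`. -/
def digit (b k i : ℕ) : ℕ := k / b ^ i % b

/-- `μ_α(k) = a₁ + ⋯ + a_{min(v,α)}`, the sum of the `α` largest positions (counted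
from `1`) of nonzero `b`-adic digits of `k`; `μ_α(0) = 0`. -/
def mualpha (b α k : ℕ) : ℕ :=
  (((((Finset.range (k + 1)).filter fun i => digit b k i ≠ 0).sort (· ≤ ·)).reverse.take
    α).map (· + 1)).sum

/-- the set `E` of positive integers whose `b`-adic digit sum is divisible by `b`. -/
def Eset (b : ℕ) : Set ℕ := {k | k ≠ 0 ∧ (b : ℕ) ∣ (Nat.digits b k).sum}

/-- the constant `A_{α,b,λ,1}`. -/
noncomputable def A1 (b α : ℕ) (lam : ℝ) : ℝ :=
  ((b : ℝ) / ((b : ℝ) - 1)) *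
    (∑ v ∈ Finset.Icc 1 (α - 1), ∏ i ∈ Finset.Icc 1 v,
        ((b : ℝ) - 1) / ((b : ℝ) ^ (lam * i) - 1) +
      (((b : ℝ) ^ (lam * α) - 1) / ((b : ℝ) ^ (lam * α) - b)) *
        ∏ i ∈ Finset.Icc 1 α, ((b : ℝ) - 1) / ((b : ℝ) ^ (lam * i) - 1))

/-- sorted list of nonzero digit positions -/
def posList (b k : ℕ) : List ℕ :=
  ((Finset.range (k + 1)).filter fun i => digit b k i ≠ 0).sort (· ≤ ·)

lemma digit_succ (b m d i : ℕ) (hd : d < b) : digit b (b * m + d) (i + 1) = digit b m i := by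
  unfold digit
  rw [pow_succ', ← Nat.div_div_eq_div_mul, Nat.mul_add_div (by omega), Nat.div_eq_of_lt hd,
    add_zero]

lemma digit_zero (b m d : ℕ) (hd : d < b) : digit b (b * m + d) 0 = d := by
  unfold digit
  simp [Nat.mul_add_mod, Nat.mod_eq_of_lt hd]

lemma lt_of_digit (b k i : ℕ) (hb : 2 ≤ b) (h : digit b k i ≠ 0) : i < k + 1 := by
  by_contra hc
  apply h
  unfold digit
  have h1 : i < b ^ i := Nat.lt_pow_self (by omega)
  rw [Nat.div_eq_of_lt (by omega), Nat.zero_mod]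

lemma mem_posList (b k i : ℕ) (hb : 2 ≤ b) : i ∈ posList b k ↔ digit b k i ≠ 0 := by
  unfold posList
  rw [Finset.mem_sort, Finset.mem_filter, Finset.mem_range]
  exact ⟨fun h => h.2, fun h => ⟨lt_of_digit b k i hb h, h⟩⟩

lemma posList_step (b m d : ℕ) (hb : 2 ≤ b) (hd : d < b) :
    posList b (b * m + d) =
      (if d = 0 then [] else [0]) ++ (posList b m).map (· + 1) := by
  have hs : (posList b m).Pairwise (· ≤ ·) := Finset.pairwise_sort _ _
  have hn : (posList b m).Nodup := Finset.sort_nodup _ _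
  have hs' : ((if d = 0 then [] else [0]) ++ (posList b m).map (· + 1)).Pairwise (· ≤ ·) := by
    rw [List.pairwise_append]
    refine ⟨by split_ifs <;> simp, ?_, ?_⟩
    · rw [List.pairwise_map]
      exact hs.imp (by intros; omega)
    · intro a ha c hc
      split_ifs at ha <;> simp_all
  have hn' : ((if d = 0 then [] else [0]) ++ (posList b m).map (· + 1)).Nodup := by
    rw [List.nodup_append]
    refine ⟨by split_ifs <;> simp, hn.map (fun _ _ h => by simpa using h), ?_⟩
    intro a ha c hc
    split_ifs at ha
    · simp at ha
    · simp at ha hc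
      omega
  rw [← (List.toFinset_sort (· ≤ ·) hn').2 hs']
  conv_lhs => unfold posList
  congr 1
  ext i
  have := mem_posList b (b * m + d) i hb
  unfold posList at this
  rw [Finset.mem_sort] at this
  rw [this, List.mem_toFinset, List.mem_append, List.mem_map]
  rcases i with _ | i
  · rw [digit_zero _ _ _ hd]
    split_ifs <;> simp_all
  · rw [digit_succ _ _ _ _ hd, ← mem_posList b m i hb]
    split_ifs <;> simp

/-- number of nonzero digits -/
def cnt (b k : ℕ) : ℕ := (posList b k).length

lemma cnt_step (b m d : ℕ) (hb : 2 ≤ b) (hd : d < b) :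
    cnt b (b * m + d) = cnt b m + if d = 0 then 0 else 1 := by
  unfold cnt
  rw [posList_step b m d hb hd]
  split_ifs <;> simp

lemma sum_map_add_one (l : List ℕ) : (l.map (· + 1)).sum = l.sum + l.length := by
  induction l with
  | nil => simp
  | cons a l ih => simp only [List.map_cons, List.sum_cons, List.length_cons, ih]; omega

lemma mu_step (b α m d : ℕ) (hb : 2 ≤ b) (hd : d < b) :
    mualpha b α (b * m + d) = mualpha b α m + min α (cnt b m) +
      if d ≠ 0 ∧ cnt b m < α then 1 else 0 := by
  have e (k : ℕ) : mualpha b α k = (((posList b k).reverse.take α).map (· + 1)).sum := rfl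
  rw [e, e, posList_step b m d hb hd]
  unfold cnt
  rw [List.reverse_append, List.take_append, List.map_append, List.sum_append,
    ← List.map_reverse, ← List.map_take, sum_map_add_one (List.map _ _)]
  simp only [List.length_map, List.length_take, List.length_reverse]
  congr 1
  by_cases h0 : d = 0
  · simp [h0]
  · by_cases h : (posList b m).length < α
    · obtain ⟨t, ht⟩ : ∃ t, α - (posList b m).length = t + 1 := ⟨α - (posList b m).length - 1, by omega⟩
      simp [h0, h, ht]
    · have ht : α - (posList b m).length = 0 := by omega
      simp [h0, h, ht]

lemma cnt_zero (b : ℕ) : cnt b 0 = 0 := by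
  simp [cnt, posList, digit]

lemma mu_zero (b α : ℕ) : mualpha b α 0 = 0 := by
  simp [mualpha, digit]

lemma sum_range_mul' (f : ℕ → ℝ) (b N : ℕ) :
    ∑ m ∈ Finset.range (N * b), f m =
      ∑ m ∈ Finset.range N, ∑ d ∈ Finset.range b, f (b * m + d) := by
  induction N with
  | zero => simp
  | succ N ih =>
    rw [Finset.sum_range_succ, ← ih, add_mul, one_mul, Finset.sum_range_add, mul_comm b N]

lemma sum_digit (b : ℕ) (hb : 2 ≤ b) (p q : ℝ) :
    ∑ d ∈ Finset.range b, (if d = 0 then p else q) = p + ((b : ℝ) - 1) * q := by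
  obtain ⟨c, rfl⟩ : ∃ c, b = c + 1 := ⟨b - 1, by omega⟩
  rw [Finset.sum_range_succ']
  simp
  ring

noncomputable def G (b α : ℕ) (x : ℝ) (v n : ℕ) : ℝ :=
  ∑ m ∈ Finset.range (b ^ n), if cnt b m = v then x ^ mualpha b α m else 0

noncomputable def H (b α : ℕ) (x : ℝ) (n : ℕ) : ℝ :=
  ∑ m ∈ Finset.range (b ^ n), if α ≤ cnt b m then x ^ mualpha b α m else 0

lemma G_succ (b α : ℕ) (hb : 2 ≤ b) (x : ℝ) (v n : ℕ) (hv : v + 1 < α) :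
    G b α x (v + 1) (n + 1) =
      x ^ (v + 1) * G b α x (v + 1) n + ((b : ℝ) - 1) * x ^ (v + 1) * G b α x v n := by
  unfold G
  rw [pow_succ, sum_range_mul', Finset.mul_sum, Finset.mul_sum, ← Finset.sum_add_distrib]
  refine Finset.sum_congr rfl fun m _ => ?_
  rw [Finset.sum_congr rfl (g := fun d => if d = 0 then
      (if cnt b m = v + 1 then x ^ (v + 1) * x ^ mualpha b α m else 0)
      else (if cnt b m = v then x ^ (v + 1) * x ^ mualpha b α m else 0)), sum_digit b hb]
  · split_ifs <;> ring
  · intro d hd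
    rw [Finset.mem_range] at hd
    rw [cnt_step b m d hb hd, mu_step b α m d hb hd]
    by_cases h0 : d = 0
    · simp only [h0, if_true, add_zero, ne_eq, not_true, false_and, if_false]
      by_cases h : cnt b m = v + 1
      · simp only [h, if_true]
        rw [min_eq_right (by omega)]
        ring
      · simp [h]
    · simp only [h0, if_false, add_left_inj, ne_eq, not_false_iff, true_and]
      by_cases h : cnt b m = v
      · simp only [h, if_true]
        rw [min_eq_right (by omega), if_pos (by omega)]
        ring
      · simp [h]

lemma G_zero_succ (b α : ℕ) (hb : 2 ≤ b) (x : ℝ) (n : ℕ) :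
    G b α x 0 (n + 1) = G b α x 0 n := by
  unfold G
  rw [pow_succ, sum_range_mul']
  refine Finset.sum_congr rfl fun m _ => ?_
  rw [Finset.sum_congr rfl (g := fun d => if d = 0 then
      (if cnt b m = 0 then x ^ mualpha b α m else 0) else 0), sum_digit b hb]
  · ring
  · intro d hd
    rw [Finset.mem_range] at hd
    rw [cnt_step b m d hb hd, mu_step b α m d hb hd]
    by_cases h0 : d = 0
    · by_cases h : cnt b m = 0 <;> simp [h0, h]
    · simp [h0]

lemma H_succ (b α : ℕ) (hb : 2 ≤ b) (x : ℝ) (v n : ℕ) (hv : v + 1 = α) :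
    H b α x (n + 1) =
      b * x ^ α * H b α x n + ((b : ℝ) - 1) * x ^ α * G b α x v n := by
  unfold G H
  rw [pow_succ, sum_range_mul', Finset.mul_sum, Finset.mul_sum, ← Finset.sum_add_distrib]
  refine Finset.sum_congr rfl fun m _ => ?_
  rw [Finset.sum_congr rfl (g := fun d => if d = 0 then
      (if α ≤ cnt b m then x ^ α * x ^ mualpha b α m else 0)
      else (if v ≤ cnt b m then x ^ α * x ^ mualpha b α m else 0)), sum_digit b hb]
  · by_cases h1 : α ≤ cnt b m
    · simp only [h1, if_true, if_pos (show v ≤ cnt b m by omega),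
        if_neg (show ¬ cnt b m = v by omega)]
      ring
    · by_cases h2 : cnt b m = v
      · simp only [h1, if_false, if_pos (show v ≤ cnt b m by omega), if_pos h2]
        ring
      · simp only [h1, if_false, if_neg (show ¬ v ≤ cnt b m by omega), if_neg h2]
        ring
  · intro d hd
    rw [Finset.mem_range] at hd
    rw [cnt_step b m d hb hd, mu_step b α m d hb hd]
    by_cases h0 : d = 0
    · simp only [h0, if_true, add_zero, ne_eq, not_true, false_and, if_false]
      by_cases h : α ≤ cnt b m
      · simp only [h, if_true]
        rw [min_eq_left h]
        ring
      · simp [h]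
    · simp only [h0, if_false, ne_eq, not_false_iff, true_and]
      by_cases h : v ≤ cnt b m
      · rw [if_pos (by omega), if_pos h]
        by_cases h1 : cnt b m < α
        · rw [if_pos h1, min_eq_right (by omega), ← pow_add]
          congr 1
          omega
        · rw [if_neg h1, min_eq_left (by omega)]
          ring
      · rw [if_neg (by omega), if_neg h]

noncomputable def P (b : ℕ) (y : ℝ) (v : ℕ) : ℝ :=
  ∏ i ∈ Finset.Icc 1 v, ((b : ℝ) - 1) / (y ^ i - 1)

lemma P_nonneg (b : ℕ) (hb : 2 ≤ b) (y : ℝ) (hy : 1 < y) (v : ℕ) : 0 ≤ P b y v := by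
  refine Finset.prod_nonneg fun i _ => div_nonneg ?_ ?_
  · have : (2 : ℝ) ≤ b := by exact_mod_cast hb
    linarith
  · have := one_le_pow₀ hy.le (n := i)
    linarith

lemma P_succ (b : ℕ) (y : ℝ) (v : ℕ) :
    P b y (v + 1) = P b y v * (((b : ℝ) - 1) / (y ^ (v + 1) - 1)) := by
  unfold P
  rw [Finset.prod_Icc_succ_top (by omega)]

lemma G_le (b α : ℕ) (hb : 2 ≤ b) (y : ℝ) (hy : 1 < y) (n v : ℕ) (hv : v < α) :
    G b α y⁻¹ v n ≤ P b y v := by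
  have hb' : (2 : ℝ) ≤ b := by exact_mod_cast hb
  induction n generalizing v with
  | zero =>
    rcases v with _ | v
    · simp [G, P, cnt_zero, mu_zero]
    · have := P_nonneg b hb y hy (v + 1)
      simpa [G, cnt_zero] using this
  | succ n ih =>
    rcases v with _ | v
    · rw [G_zero_succ b α hb]
      exact ih 0 hv
    · rw [G_succ b α hb _ _ _ hv]
      have h1 := ih (v + 1) hv
      have h2 := ih v (by omega)
      have hp : 1 < y ^ (v + 1) := one_lt_pow₀ hy (by omega)
      have hx : 0 ≤ y⁻¹ ^ (v + 1) := by positivity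
      have hx2 : 0 ≤ ((b : ℝ) - 1) * y⁻¹ ^ (v + 1) := mul_nonneg (by linarith) hx
      refine (add_le_add (mul_le_mul_of_nonneg_left h1 hx)
        (mul_le_mul_of_nonneg_left h2 hx2)).trans (le_of_eq ?_)
      rw [P_succ, inv_pow]
      have : y ^ (v + 1) - 1 ≠ 0 := by linarith
      have : y ^ (v + 1) ≠ 0 := by linarith
      generalize y ^ (v + 1) = z at *
      field_simp
      ring

lemma H_le (b α : ℕ) (hb : 2 ≤ b) (hα : 1 ≤ α) (y : ℝ) (hy : 1 < y) (hya : (b : ℝ) < y ^ α)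
    (n : ℕ) : H b α y⁻¹ n ≤ (y ^ α - 1) / (y ^ α - b) * P b y α := by
  have hb' : (2 : ℝ) ≤ b := by exact_mod_cast hb
  have hnn : 0 ≤ (y ^ α - 1) / (y ^ α - b) * P b y α :=
    mul_nonneg (div_nonneg (by linarith) (by linarith)) (P_nonneg b hb y hy α)
  induction n with
  | zero =>
    have : ¬ α = 0 := by omega
    simpa [H, cnt_zero, this] using hnn
  | succ n ih =>
    obtain ⟨v, rfl⟩ : ∃ v, α = v + 1 := ⟨α - 1, by omega⟩
    rw [H_succ b (v + 1) hb _ v n rfl]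
    have h2 := G_le b (v + 1) hb y hy n v (by omega)
    have hx : 0 ≤ (b : ℝ) * y⁻¹ ^ (v + 1) := by positivity
    have hx2 : 0 ≤ ((b : ℝ) - 1) * y⁻¹ ^ (v + 1) := mul_nonneg (by linarith) (by positivity)
    refine (add_le_add (mul_le_mul_of_nonneg_left ih hx)
        (mul_le_mul_of_nonneg_left h2 hx2)).trans (le_of_eq ?_)
    rw [P_succ, inv_pow]
    have : y ^ (v + 1) - 1 ≠ 0 := by linarith
    have : y ^ (v + 1) - b ≠ 0 := by linarith
    have : y ^ (v + 1) ≠ 0 := by linarith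
    generalize y ^ (v + 1) = z at *
    field_simp
    ring

lemma total_eq (b α : ℕ) (x : ℝ) (n : ℕ) :
    ∑ m ∈ Finset.range (b ^ n), x ^ mualpha b α m =
      ∑ v ∈ Finset.range α, G b α x v n + H b α x n := by
  unfold G H
  rw [Finset.sum_comm, ← Finset.sum_add_distrib]
  refine Finset.sum_congr rfl fun m _ => ?_
  rw [Finset.sum_ite_eq]
  by_cases h : cnt b m < α
  · simp [h]
  · simp [h, not_lt.1 h]

lemma Eset_div_ne (b k : ℕ) (hb : 2 ≤ b) (hk : k ∈ Eset b) : k / b ≠ 0 := by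
  obtain ⟨h0, h⟩ := hk
  intro hz
  have hlt : k < b := by
    rcases Nat.div_eq_zero_iff.1 hz with h | h <;> omega
  rw [Nat.digits_of_lt b k h0 hlt] at h
  simp at h
  exact absurd (Nat.le_of_dvd (by omega) h) (by omega)

lemma Eset_inj (b k l : ℕ) (hb : 2 ≤ b) (hk : k ∈ Eset b) (hl : l ∈ Eset b)
    (h : k / b = l / b) : k = l := by
  obtain ⟨hk0, hk⟩ := hk
  obtain ⟨hl0, hl⟩ := hl
  rw [Nat.digits_def' (by omega) (by omega), List.sum_cons] at hk hl
  rw [← h] at hl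
  have h1 : k % b ≡ l % b [MOD b] := by
    apply Nat.ModEq.add_right_cancel' ((b.digits (k / b)).sum)
    exact ((Nat.modEq_zero_iff_dvd).2 hk).trans ((Nat.modEq_zero_iff_dvd).2 hl).symm
  have h2 : k % b = l % b := by
    simpa [Nat.ModEq] using h1
  rw [← Nat.div_add_mod k b, ← Nat.div_add_mod l b, h, h2]

/-- For every `λ > 1/α`, `Σ_{k ∈ E} b^{-λ μ_α(⌊k/b⌋)} ≤ A_{α,b,λ,1}`. -/
theorem sum_Eset_le (b α : ℕ) (hb : b.Prime) (hα : 2 ≤ α) (lam : ℝ)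
    (hlam : 1 / (α : ℝ) < lam) :
    Summable (fun k : Eset b => (b : ℝ) ^ (-(lam * (mualpha b α (k.1 / b) : ℝ)))) ∧
      ∑' k : Eset b, (b : ℝ) ^ (-(lam * (mualpha b α (k.1 / b) : ℝ))) ≤ A1 b α lam := by
  have hb2 : 2 ≤ b := hb.two_le
  have hbR : (2 : ℝ) ≤ b := by exact_mod_cast hb2
  have hαR : (2 : ℝ) ≤ α := by exact_mod_cast hα
  have hl0 : 0 < lam := lt_trans (by positivity) hlam
  set y : ℝ := (b : ℝ) ^ lam with hy
  have hy1 : 1 < y := Real.one_lt_rpow (by linarith) hl0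
  have hpow (i : ℕ) : (b : ℝ) ^ (lam * i) = y ^ i := by
    rw [hy, Real.rpow_mul (by linarith), Real.rpow_natCast]
  have hya : (b : ℝ) < y ^ α := by
    rw [← hpow]
    refine Real.self_lt_rpow_of_one_lt (by linarith) ?_
    rwa [div_lt_iff₀ (by linarith)] at hlam
  have hterm (i : ℕ) : (b : ℝ) ^ (-(lam * (i : ℝ))) = y⁻¹ ^ i := by
    rw [Real.rpow_neg (by linarith), hpow, inv_pow]
  have hA : A1 b α lam = ((b : ℝ) / ((b : ℝ) - 1)) *
      (∑ v ∈ Finset.Icc 1 (α - 1), P b y v + (y ^ α - 1) / (y ^ α - b) * P b y α) := by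
    unfold A1 P
    simp only [hpow]
  have hnn : 0 ≤ ∑ v ∈ Finset.Icc 1 (α - 1), P b y v + (y ^ α - 1) / (y ^ α - b) * P b y α := by
    refine add_nonneg (Finset.sum_nonneg fun v _ => P_nonneg b hb2 y hy1 v) ?_
    exact mul_nonneg (div_nonneg (by linarith) (by linarith)) (P_nonneg b hb2 y hy1 α)
  have hA' : ∑ v ∈ Finset.Icc 1 (α - 1), P b y v + (y ^ α - 1) / (y ^ α - b) * P b y α
      ≤ A1 b α lam := by
    rw [hA]
    refine le_mul_of_one_le_left hnn ?_
    rw [le_div_iff₀ (by linarith)]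
    linarith
  have htot (n : ℕ) : ∑ m ∈ (Finset.range (b ^ n)).erase 0, y⁻¹ ^ mualpha b α m ≤
      A1 b α lam := by
    refine le_trans ?_ hA'
    have h1 := Finset.add_sum_erase (Finset.range (b ^ n)) (fun m => y⁻¹ ^ mualpha b α m)
      (a := 0) (Finset.mem_range.2 (by positivity))
    rw [total_eq] at h1
    have h2 : ∑ v ∈ Finset.range α, G b α y⁻¹ v n ≤ ∑ v ∈ Finset.range α, P b y v :=
      Finset.sum_le_sum fun v hv => G_le b α hb2 y hy1 n v (Finset.mem_range.1 hv)
    have h3 := H_le b α hb2 (by omega) y hy1 hya n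
    have h4 : ∑ v ∈ Finset.range α, P b y v = 1 + ∑ v ∈ Finset.Icc 1 (α - 1), P b y v := by
      have e : Finset.range α = insert 0 (Finset.Icc 1 (α - 1)) := by
        ext i
        simp only [Finset.mem_range, Finset.mem_insert, Finset.mem_Icc]
        omega
      rw [e, Finset.sum_insert (by simp)]
      simp [P]
    simp only [mu_zero, pow_zero] at h1
    linarith
  have hfin (u : Finset (Eset b)) :
      ∑ k ∈ u, (b : ℝ) ^ (-(lam * (mualpha b α (k.1 / b) : ℝ))) ≤ A1 b α lam := by
    simp only [hterm]
    have hinj : Set.InjOn (fun k : Eset b => k.1 / b) u := fun k _ l _ h =>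
      Subtype.ext (Eset_inj b k.1 l.1 hb2 k.2 l.2 h)
    rw [← Finset.sum_image (f := fun m => y⁻¹ ^ mualpha b α m) hinj]
    set s := u.image (fun k : Eset b => k.1 / b) with hs
    refine le_trans (Finset.sum_le_sum_of_subset_of_nonneg ?_ ?_) (htot (s.sup id))
    · intro m hm
      have hle : m ≤ s.sup id := Finset.le_sup (f := id) hm
      have hlt : s.sup id < b ^ (s.sup id) := Nat.lt_pow_self (by omega)
      rw [Finset.mem_erase, Finset.mem_range]
      refine ⟨?_, by omega⟩
      rw [hs, Finset.mem_image] at hm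
      obtain ⟨k, _, rfl⟩ := hm
      exact Eset_div_ne b k.1 hb2 k.2
    · intro i _ _
      positivity
  have hpos (k : Eset b) : 0 ≤ (b : ℝ) ^ (-(lam * (mualpha b α (k.1 / b) : ℝ))) := by
    positivity
  exact ⟨summable_of_sum_le hpos hfin, Real.tsum_le_of_sum_le hpos hfin⟩

end QMC
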